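/- Let B ∈ F{x,y} with B ∉ F and let k ≥ 1. Suppose A := d^k(B) is irreducible with ord_x(A) ≥ 0. Then the differential curve (C,A) is not unirational: there is no differential rational parametrization (u, P₁, Q₁, P₂, Q₂) with I((P₁(u)/Q₁(u), P₂(u)/Q₂(u))) = sat(A). -/

import Mathlib

/-!
Let `A = d^k(B)` and let `η` be the point given by a parametrization, so `I(η) = sat(A)`. Since
`A ∈ sat(A)`, the element `B(η)` of `F⟨u⟩` satisfies `D^k(B(η)) = A(η) = 0`. As `u` is
differentially transcendental, an element of `F⟨u⟩` whose derivative lies in `F` lies in `F`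
(`mem_range_of_deriv`), so by induction `B(η) = c` for some `c ∈ F` (`mem_range_of_iterate`).
Thus `B - c` is a nonzero element of `sat(A)`, and its order in `x` is smaller than that of `A`
because `k ≥ 1` (`exists_lt_of_iterate`).

This contradicts the fact that `sat(A)` contains no nonzero polynomial of lower `x`-order than the
irreducible `A` (`notMem_sat`). For a relation `S^m f = ∑ g_j d^j(A)` with `S` the separant, consider
the generic zero of `A` in the fraction field of `F{x,y}/(A)`. There `S` does not vanish, and the
derivatives `d^j(A) = S x_{s+j} + T_j`, `j ≥ 1`, can be made zero one after another by changing
the value of `x_{s+j}` only (`exists_extend_zero`). Hence `f` vanishes at the generic zero,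
that is, `A ∣ f`, which is impossible when `f` is nonzero and free of `x_s`.

Both halves rest on the same computation: the derivative of a differential polynomial is linear
in its new highest variable, with the separant as coefficient (`exists_deriv_eq`).
-/


open MvPolynomial

noncomputable section

namespace DiffCurve

variable (F : Type*) {E : Type*} [Field F] [Field E] [Algebra F E]

/-- `F⟨S⟩`: the intermediate field of `E/F` generated by all iterated derivatives of
elements of `S`. -/
def genDF (D : Derivation ℤ E E) (S : Set E) : IntermediateField F E :=
  IntermediateField.adjoin F {x | ∃ s ∈ S, ∃ k : ℕ, (⇑D)^[k] s = x}

/-- `u` is differentially transcendental over `F`. -/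
def DiffTrans (D : Derivation ℤ E E) (u : E) : Prop :=
  AlgebraicIndependent F (fun k : ℕ => (⇑D)^[k] u)

/-- Evaluation of `P ∈ F{u}` at `v`: the `F`-algebra map sending `u_k ↦ D^k v`. -/
def evalD (D : Derivation ℤ E E) (v : E) : MvPolynomial ℕ F →ₐ[F] E :=
  aeval fun k => (⇑D)^[k] v

/-- Evaluation of `A ∈ F{x,y}` at `(η₁, η₂)`: `x_k ↦ D^k η₁`, `y_k ↦ D^k η₂`. -/
def evalD2 (D : Derivation ℤ E E) (η₁ η₂ : E) : MvPolynomial (Fin 2 × ℕ) F →ₐ[F] E :=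
  aeval fun p => (⇑D)^[p.2] (if p.1 = 0 then η₁ else η₂)

variable {F}

/-- The order of `P ∈ F{u}`: the largest `k` such that `u_k` occurs (`⊥` if none). -/
def ordU (P : MvPolynomial ℕ F) : WithBot ℕ := P.vars.max

/-- `ord_x` (for `i = 0`) resp. `ord_y` (for `i = 1`) of `A ∈ F{x,y}`. -/
def ordIdx (i : Fin 2) (A : MvPolynomial (Fin 2 × ℕ) F) : WithBot ℕ :=
  ((A.vars.filter fun v => v.1 = i).image Prod.snd).max

/-- `ord(A) = max(ord_x A, ord_y A)`. -/
def ordXY (A : MvPolynomial (Fin 2 × ℕ) F) : WithBot ℕ :=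
  max (ordIdx 0 A) (ordIdx 1 A)

/-- The separant of `A` w.r.t. `x`: `∂A/∂x_s` where `s = ord_x A` (junk value `1` if
`ord_x A = ⊥`). -/
def sepX (A : MvPolynomial (Fin 2 × ℕ) F) : MvPolynomial (Fin 2 × ℕ) F :=
  WithBot.recBotCoe 1 (fun s => pderiv ((0 : Fin 2), s) A) (ordIdx 0 A)

/-- The differential ideal `[A]` generated by `A`, for a derivation `d`. -/
def diffIdeal {R : Type*} [CommRing R] (d : Derivation ℤ R R) (A : R) : Ideal R :=
  Ideal.span (Set.range fun k : ℕ => (⇑d)^[k] A)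

/-- The general component `sat(A) = [A] : S_A^∞` (as a set). -/
def satSet (dxy : Derivation ℤ (MvPolynomial (Fin 2 × ℕ) F) (MvPolynomial (Fin 2 × ℕ) F))
    (A : MvPolynomial (Fin 2 × ℕ) F) : Set (MvPolynomial (Fin 2 × ℕ) F) :=
  {f | ∃ m : ℕ, sepX A ^ m * f ∈ diffIdeal dxy A}

variable (F)

/-- `(u, P₁, Q₁, P₂, Q₂)` is a differential rational parametrization of the differential
curve `(C, A)`. -/
def IsParam (D : Derivation ℤ E E)
    (dxy : Derivation ℤ (MvPolynomial (Fin 2 × ℕ) F) (MvPolynomial (Fin 2 × ℕ) F))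
    (A : MvPolynomial (Fin 2 × ℕ) F) (u : E) (P₁ Q₁ P₂ Q₂ : MvPolynomial ℕ F) : Prop :=
  DiffTrans F D u ∧
  P₁ ≠ 0 ∧ Q₁ ≠ 0 ∧ IsRelPrime P₁ Q₁ ∧ P₂ ≠ 0 ∧ Q₂ ≠ 0 ∧ IsRelPrime P₂ Q₂ ∧
  ¬ (evalD F D u P₁ / evalD F D u Q₁ ∈ (algebraMap F E).range ∧
     evalD F D u P₂ / evalD F D u Q₂ ∈ (algebraMap F E).range) ∧
  {B : MvPolynomial (Fin 2 × ℕ) F |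
      evalD2 F D (evalD F D u P₁ / evalD F D u Q₁) (evalD F D u P₂ / evalD F D u Q₂) B = 0}
    = satSet dxy A

/-- A proper differential rational parametrization: additionally
`F⟨η₁, η₂⟩ = F⟨u⟩`. -/
def IsProperParam (D : Derivation ℤ E E)
    (dxy : Derivation ℤ (MvPolynomial (Fin 2 × ℕ) F) (MvPolynomial (Fin 2 × ℕ) F))
    (A : MvPolynomial (Fin 2 × ℕ) F) (u : E) (P₁ Q₁ P₂ Q₂ : MvPolynomial ℕ F) : Prop :=
  IsParam F D dxy A u P₁ Q₁ P₂ Q₂ ∧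
  genDF F D {evalD F D u P₁ / evalD F D u Q₁, evalD F D u P₂ / evalD F D u Q₂}
    = genDF F D {u}

/-- The projection `F{x,y,u} → F{x,y}` sending `u_k ↦ 0` and keeping `x_k`, `y_k`. -/
def projXY : MvPolynomial (Fin 3 × ℕ) F →ₐ[F] MvPolynomial (Fin 2 × ℕ) F :=
  aeval fun p => if h : (p.1 : ℕ) < 2 then X ((⟨p.1, h⟩ : Fin 2), p.2) else 0

/-- The `i`-th row polynomial of the differential resultant matrix:
`d^{m₂}f₁, …, f₁, d^{m₁}f₂, …, f₂` where `f₁ = x₀·Q₁ − P₁`, `f₂ = y₀·Q₂ − P₂`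
in `F{x,y,u}`. -/
def resRow (dxyu : Derivation ℤ (MvPolynomial (Fin 3 × ℕ) F) (MvPolynomial (Fin 3 × ℕ) F))
    (P₁ Q₁ P₂ Q₂ : MvPolynomial ℕ F) (m₁ m₂ : ℕ) (i : ℕ) : MvPolynomial (Fin 3 × ℕ) F :=
  if i ≤ m₂ then
    (⇑dxyu)^[m₂ - i] (X ((0 : Fin 3), 0) * rename (fun k => ((2 : Fin 3), k)) Q₁
      - rename (fun k => ((2 : Fin 3), k)) P₁)
  else
    (⇑dxyu)^[m₁ + m₂ + 1 - i] (X ((1 : Fin 3), 0) * rename (fun k => ((2 : Fin 3), k)) Q₂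
      - rename (fun k => ((2 : Fin 3), k)) P₂)

/-- The differential resultant `δ-Res(f₁, f₂) ∈ F{x,y}`: the determinant of the
`(m₁+m₂+2) × (m₁+m₂+2)` matrix whose rows are the coefficient vectors of
`d^{m₂}f₁, …, f₁, d^{m₁}f₂, …, f₂` w.r.t. `u_{m₁+m₂}, …, u_1, u_0, 1`. -/
def deltaRes (dxyu : Derivation ℤ (MvPolynomial (Fin 3 × ℕ) F) (MvPolynomial (Fin 3 × ℕ) F))
    (P₁ Q₁ P₂ Q₂ : MvPolynomial ℕ F) (m₁ m₂ : ℕ) : MvPolynomial (Fin 2 × ℕ) F :=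
  Matrix.det (Matrix.of fun i j : Fin (m₁ + m₂ + 2) =>
    if (j : ℕ) ≤ m₁ + m₂ then
      projXY F (pderiv ((2 : Fin 3), m₁ + m₂ - (j : ℕ)) (resRow F dxyu P₁ Q₁ P₂ Q₂ m₁ m₂ i))
    else projXY F (resRow F dxyu P₁ Q₁ P₂ Q₂ m₁ m₂ i))

/-- A linear homogeneous differential polynomial `L = Σ_k a_k u_k` in `F{u}`. -/
def IsLinHom {F : Type*} [Field F] (L : MvPolynomial ℕ F) : Prop :=
  ∀ m ∈ L.support, ∃ k : ℕ, m = Finsupp.single k 1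


/-! ### Partial derivatives and divisibility -/

section Helpers

variable {F}

theorem pderiv_ne_zero_of_mem_vars [CharZero F] {σ : Type*} {p : MvPolynomial σ F} {i : σ}
    (hi : i ∈ p.vars) : pderiv i p ≠ 0 := by
  classical
  obtain ⟨m, hm, him⟩ := (mem_vars_iff_mem_support i).1 hi
  intro h
  have h1 := coeff_pderiv (i := i) p (m - Finsupp.single i 1)
  have hmi : m i ≠ 0 := by simpa using him
  have hadd : m - Finsupp.single i 1 + Finsupp.single i 1 = m := by
    ext j
    by_cases hj : j = i
    · subst hj; simp; omega
    · simp [hj]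
  rw [h, hadd, coeff_zero, eq_comm, mul_eq_zero] at h1
  rcases h1 with h1 | h1
  · exact (mem_support_iff.1 hm) h1
  · exact Nat.cast_add_one_ne_zero _ h1

theorem degreeOf_pderiv_lt [CharZero F] {σ : Type*} {p : MvPolynomial σ F} {i : σ}
    (hi : i ∈ p.vars) : (pderiv i p).degreeOf i < p.degreeOf i := by
  classical
  have h0 : p.degreeOf i ≠ 0 := mem_vars_iff_degreeOf_ne_zero.1 hi
  rw [degreeOf_lt_iff (Nat.pos_of_ne_zero h0)]
  intro m hm
  rw [mem_support_iff, coeff_pderiv] at hm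
  have := monomial_le_degreeOf i (mem_support_iff.2 (left_ne_zero_of_mul hm))
  simp at this
  omega

theorem not_dvd_pderiv [CharZero F] {σ : Type*} {p : MvPolynomial σ F} {i : σ}
    (hi : i ∈ p.vars) : ¬ p ∣ pderiv i p := by
  rintro ⟨g, hg⟩
  have h0 := pderiv_ne_zero_of_mem_vars hi
  have h1 := degreeOf_pderiv_lt hi
  rw [hg] at h0
  rw [hg, degreeOf_mul_eq (left_ne_zero_of_mul h0) (right_ne_zero_of_mul h0)] at h1
  omega

theorem pderiv_eq_zero_of_supported {σ : Type*} {p : MvPolynomial σ F} {V : Set σ} {i : σ}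
    (hp : p ∈ supported F V) (hi : i ∉ V) : pderiv i p = 0 :=
  pderiv_eq_zero_of_notMem_vars fun h => hi (mem_supported.1 hp h)

theorem pderiv_mem_supported {σ : Type*} {V : Set σ} {p : MvPolynomial σ F}
    (hp : p ∈ supported F V) (i : σ) : pderiv i p ∈ supported F V := by
  classical
  rw [supported_eq_adjoin_X] at hp
  induction hp using Algebra.adjoin_induction with
  | mem x hx =>
    obtain ⟨j, -, rfl⟩ := hx
    by_cases h : j = i
    · subst h; rw [pderiv_X_self]; exact one_mem _
    · rw [pderiv_X_of_ne h]; exact zero_mem _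
  | algebraMap r => rw [algebraMap_eq, pderiv_C]; exact zero_mem _
  | add x y _ _ hx hy => rw [map_add]; exact add_mem hx hy
  | mul x y hxm hym hx hy =>
    rw [pderiv_mul]
    exact add_mem (mul_mem hx hym) (mul_mem hxm hy)

/-! ### The shape of the derivative of a differential polynomial -/

/-- Let `V` contain the variables of `P` and the derivatives `next i` of all `i ∈ V` other than
`i₀`. Then the derivative of `P` is linear in `next i₀`, with the separant `∂P/∂i₀` as
coefficient. The derivation acts on the values of the polynomials in a ring `R`, so that the
statement covers both `F{x,y}` itself (`v = X`) and differential fields. -/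
theorem exists_deriv_eq {σ R : Type*} [CommRing R] [Algebra F R] (D : Derivation ℤ R R)
    (δ : F → F) (hD : ∀ a, D (algebraMap F R a) = algebraMap F R (δ a))
    (v : σ → R) (next : σ → σ) (hv : ∀ i, D (v i) = v (next i)) (V : Set σ) (i₀ : σ)
    (hV : ∀ i ∈ V, i ≠ i₀ → next i ∈ V) {P : MvPolynomial σ F} (hP : P ∈ supported F V) :
    ∃ T ∈ supported F V, D (aeval v P) = aeval v (pderiv i₀ P * X (next i₀) + T) := by
  classical
  rw [supported_eq_adjoin_X] at hP
  induction hP using Algebra.adjoin_induction with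
  | mem x hx =>
    obtain ⟨j, hj, rfl⟩ := hx
    by_cases h : j = i₀
    · subst h
      exact ⟨0, zero_mem _, by simp [hv]⟩
    · exact ⟨X (next j), X_mem_supported.2 (hV j hj h), by simp [hv, pderiv_X_of_ne h]⟩
  | algebraMap r => exact ⟨C (δ r), Subalgebra.algebraMap_mem _ _, by simp [hD]⟩
  | add x y _ _ hx hy =>
    obtain ⟨S, hS, hS'⟩ := hx
    obtain ⟨T, hT, hT'⟩ := hy
    refine ⟨S + T, add_mem hS hT, ?_⟩
    simp only [map_add, hS', hT', map_mul]
    ring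
  | mul x y hxm hym hx hy =>
    obtain ⟨S, hS, hS'⟩ := hx
    obtain ⟨T, hT, hT'⟩ := hy
    refine ⟨S * y + x * T, add_mem (mul_mem hS hym) (mul_mem hxm hT), ?_⟩
    simp only [map_add, map_mul, Derivation.leibniz, hS', hT', smul_eq_mul]
    ring

/-! ### Constants of the field generated by a differentially transcendental element -/

/-- The field `F⟨u⟩` of differential rational functions of `u`, as the set of quotients of values
of coprime differential polynomials. -/
def ratSet (F : Type*) {E : Type*} [Field F] [Field E] [Algebra F E] (D : Derivation ℤ E E)
    (u : E) : Set E :=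
  {w | ∃ p q : MvPolynomial ℕ F, q ≠ 0 ∧ IsRelPrime p q ∧ w = evalD F D u p / evalD F D u q}

theorem evalD_ne_zero {D : Derivation ℤ E E} {u : E} (hu : DiffTrans F D u)
    {q : MvPolynomial ℕ F} (hq : q ≠ 0) : evalD F D u q ≠ 0 := by
  intro h
  apply hq
  apply (algebraicIndependent_iff_injective_aeval.1 hu)
  rw [map_zero]; exact h

/-- Cancelling the greatest common factor puts any quotient into coprime form. -/
theorem mem_ratSet {D : Derivation ℤ E E} {u : E} (hu : DiffTrans F D u)
    (p : MvPolynomial ℕ F) {q : MvPolynomial ℕ F} (hq : q ≠ 0) :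
    evalD F D u p / evalD F D u q ∈ ratSet F D u := by
  obtain ⟨p', q', c, hrel, rfl, rfl⟩ := UniqueFactorizationMonoid.exists_reduced_factors' p q hq
  refine ⟨p', q', right_ne_zero_of_mul hq, hrel, ?_⟩
  rw [map_mul, map_mul, mul_div_mul_left _ _ (evalD_ne_zero hu (left_ne_zero_of_mul hq))]

theorem exists_evalD_deriv {δ : F → F} {D : Derivation ℤ E E}
    (hD : ∀ a : F, D (algebraMap F E a) = algebraMap F E (δ a)) (u : E)
    {n : ℕ} {P : MvPolynomial ℕ F} (hP : P ∈ supported F {i | i ≤ n}) :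
    ∃ T ∈ supported F {i | i ≤ n},
      D (evalD F D u P) = evalD F D u (pderiv n P * X (n + 1) + T) :=
  exists_deriv_eq D δ hD (fun k => (⇑D)^[k] u) (· + 1)
    (fun i => (Function.iterate_succ_apply' D i u).symm) {i | i ≤ n} n
    (fun i (hi : i ≤ n) hne => by show i + 1 ≤ n; omega) hP

theorem exists_supported_le (P : MvPolynomial ℕ F) : ∃ n, P ∈ supported F {i | i ≤ n} :=
  ⟨P.vars.sup id, mem_supported.2 fun _ hi => Finset.le_sup (f := id) hi⟩

theorem exists_max_var {P : MvPolynomial ℕ F} (hP : P.vars.Nonempty) :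
    ∃ n ∈ P.vars, P ∈ supported F {i | i ≤ n} :=
  ⟨P.vars.max' hP, P.vars.max'_mem hP, mem_supported.2 fun i hi => P.vars.le_max' i hi⟩

/-- The coefficient of `X i` can be read off by `pderiv i` when the rest avoids `X i`. -/
theorem pderiv_mul_X_add {σ : Type*} {V : Set σ} {S T : MvPolynomial σ F} {i : σ} (hi : i ∉ V)
    (hS : S ∈ supported F V) (hT : T ∈ supported F V) : pderiv i (S * X i + T) = S := by
  rw [map_add, pderiv_mul, pderiv_eq_zero_of_supported hS hi, pderiv_eq_zero_of_supported hT hi,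
    pderiv_X_self]
  ring

/-- A differential rational function of `u` whose derivative lies in `F` lies itself in `F`: in
lowest terms `p/q`, the polynomial `q` divides its own derivative, which forces `q ∈ F`, and a
nonconstant `p` has a nonconstant derivative. -/
theorem mem_range_of_deriv [CharZero F] {δ : F → F} {D : Derivation ℤ E E}
    (hD : ∀ a : F, D (algebraMap F E a) = algebraMap F E (δ a)) {u : E}
    (hu : DiffTrans F D u) {w : E} (hw : w ∈ ratSet F D u) {c : F}
    (hc : D w = algebraMap F E c) : ∃ a : F, w = algebraMap F E a := by
  have hinj : Function.Injective (evalD F D u) := algebraicIndependent_iff_injective_aeval.1 hu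
  have hCe : ∀ a : F, evalD F D u (C a) = algebraMap F E a := fun a => by simp [evalD]
  obtain ⟨p, q, hq, hrel, rfl⟩ := hw
  have hq0 := evalD_ne_zero hu hq
  have hqC : q.vars = ∅ := by
    by_contra hne
    obtain ⟨n, hn, hsup⟩ := exists_max_var (Finset.nonempty_iff_ne_empty.2 hne)
    obtain ⟨T, hT, hTe⟩ := exists_evalD_deriv hD u hsup
    obtain ⟨m, hm⟩ := exists_supported_le p
    obtain ⟨T', -, hTe'⟩ := exists_evalD_deriv hD u hm
    set p' := pderiv m p * X (m + 1) + T'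
    set q' := pderiv n q * X (n + 1) + T with hq'
    have h1 : q * p' - p * q' = C c * q ^ 2 := by
      apply hinj
      rw [Derivation.leibniz_div, hTe, hTe'] at hc
      simp only [map_sub, map_mul, map_pow, hCe, ← hc, smul_eq_mul]
      field_simp
    have h2 : q ∣ p * q' := ⟨p' - C c * q, by linear_combination -h1⟩
    obtain ⟨g, hg⟩ := hrel.symm.dvd_of_dvd_mul_left h2
    have hnn : n + 1 ∉ {i | i ≤ n} := by simp
    have h3 := congrArg (pderiv (n + 1)) hg
    rw [hq', pderiv_mul_X_add hnn (pderiv_mem_supported hsup n) hT, pderiv_mul,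
      pderiv_eq_zero_of_supported hsup hnn, zero_mul, zero_add] at h3
    exact not_dvd_pderiv hn ⟨_, h3⟩
  obtain ⟨a, rfl⟩ : ∃ a, q = C a := ⟨_, vars_eq_empty_iff_eq_C.1 hqC⟩
  have hw : evalD F D u p / evalD F D u (C a) = evalD F D u (C a⁻¹ * p) := by
    rw [map_mul, hCe, hCe, map_inv₀, div_eq_inv_mul]
  rw [hw] at hc ⊢
  set r := C a⁻¹ * p
  have hrC : r.vars = ∅ := by
    by_contra hne
    obtain ⟨n, hn, hsup⟩ := exists_max_var (Finset.nonempty_iff_ne_empty.2 hne)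
    obtain ⟨T, hT, hTe⟩ := exists_evalD_deriv hD u hsup
    rw [hTe, ← hCe] at hc
    have h3 := congrArg (pderiv (n + 1)) (hinj hc)
    rw [pderiv_mul_X_add (by simp) (pderiv_mem_supported hsup n) hT, pderiv_C] at h3
    exact pderiv_ne_zero_of_mem_vars hn h3
  exact ⟨_, (congrArg (evalD F D u) (vars_eq_empty_iff_eq_C.1 hrC)).trans (hCe _)⟩

theorem deriv_mem_ratSet {δ : F → F} {D : Derivation ℤ E E}
    (hD : ∀ a : F, D (algebraMap F E a) = algebraMap F E (δ a)) {u : E}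
    (hu : DiffTrans F D u) {w : E} (hw : w ∈ ratSet F D u) : D w ∈ ratSet F D u := by
  obtain ⟨p, q, hq, -, rfl⟩ := hw
  have hq0 := evalD_ne_zero hu hq
  obtain ⟨n, hn⟩ := exists_supported_le q
  obtain ⟨T, -, hTe⟩ := exists_evalD_deriv hD u hn
  obtain ⟨m, hm⟩ := exists_supported_le p
  obtain ⟨T', -, hTe'⟩ := exists_evalD_deriv hD u hm
  rw [Derivation.leibniz_div, hTe, hTe']
  convert mem_ratSet hu (q * (pderiv m p * X (m + 1) + T') - p * (pderiv n q * X (n + 1) + T))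
    (pow_ne_zero 2 hq) using 1
  simp only [map_sub, map_mul, map_pow, smul_eq_mul]
  field_simp

theorem mem_range_of_iterate [CharZero F] {δ : F → F} {D : Derivation ℤ E E}
    (hD : ∀ a : F, D (algebraMap F E a) = algebraMap F E (δ a)) {u : E}
    (hu : DiffTrans F D u) (k : ℕ) {w : E} (hw : w ∈ ratSet F D u)
    (hk : (⇑D)^[k] w = 0) : ∃ a : F, w = algebraMap F E a := by
  induction k generalizing w with
  | zero => exact ⟨0, by simpa using hk⟩
  | succ k ih =>
    obtain ⟨c, hc⟩ := ih (deriv_mem_ratSet hD hu hw) hk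
    exact mem_range_of_deriv hD hu hw hc

theorem add_mem_ratSet {D : Derivation ℤ E E} {u : E} (hu : DiffTrans F D u) {a b : E}
    (ha : a ∈ ratSet F D u) (hb : b ∈ ratSet F D u) : a + b ∈ ratSet F D u := by
  obtain ⟨p, q, hq, -, rfl⟩ := ha
  obtain ⟨p', q', hq', -, rfl⟩ := hb
  convert mem_ratSet hu (p * q' + q * p') (mul_ne_zero hq hq') using 1
  simp only [map_add, map_mul]
  exact div_add_div _ _ (evalD_ne_zero hu hq) (evalD_ne_zero hu hq')

theorem mul_mem_ratSet {D : Derivation ℤ E E} {u : E} (hu : DiffTrans F D u) {a b : E}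
    (ha : a ∈ ratSet F D u) (hb : b ∈ ratSet F D u) : a * b ∈ ratSet F D u := by
  obtain ⟨p, q, hq, -, rfl⟩ := ha
  obtain ⟨p', q', hq', -, rfl⟩ := hb
  convert mem_ratSet hu (p * p') (mul_ne_zero hq hq') using 1
  simp only [map_mul]
  exact div_mul_div_comm _ _ _ _

theorem evalD2_mem_ratSet {δ : F → F} {D : Derivation ℤ E E}
    (hD : ∀ a : F, D (algebraMap F E a) = algebraMap F E (δ a)) {u : E}
    (hu : DiffTrans F D u) {η₁ η₂ : E} (h₁ : η₁ ∈ ratSet F D u) (h₂ : η₂ ∈ ratSet F D u)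
    (P : MvPolynomial (Fin 2 × ℕ) F) : evalD2 F D η₁ η₂ P ∈ ratSet F D u := by
  induction P using MvPolynomial.induction_on with
  | C a =>
    convert mem_ratSet hu (C a) one_ne_zero using 1
    simp [evalD2, evalD]
  | add p q hp hq => rw [map_add]; exact add_mem_ratSet hu hp hq
  | mul_X p v hp =>
    rw [map_mul]
    refine mul_mem_ratSet hu hp ?_
    obtain ⟨i, k⟩ := v
    have hit : ∀ w ∈ ratSet F D u, (⇑D)^[k] w ∈ ratSet F D u := by
      induction k with
      | zero => exact fun w hw => hw
      | succ k ih => exact fun w hw => ih _ (deriv_mem_ratSet hD hu hw)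
    simp only [evalD2, aeval_X]
    apply hit
    split_ifs
    exacts [h₁, h₂]

/-! ### Differential polynomials in two indeterminates -/

/-- The variables `y_k` together with the `x_k` for `k ≤ n`. -/
def xLe (n : ℕ) : Set (Fin 2 × ℕ) := {v | v.1 = 0 → v.2 ≤ n}

theorem xLe_mono {m n : ℕ} (h : m ≤ n) : xLe m ⊆ xLe n := fun _ hv h0 => (hv h0).trans h

theorem succ_notMem_xLe {n m : ℕ} (h : n < m) : ((0 : Fin 2), m) ∉ xLe n := fun h' => by
  have : m ≤ n := h' rfl
  omega

variable {δF : Derivation ℤ F F}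
  {dxy : Derivation ℤ (MvPolynomial (Fin 2 × ℕ) F) (MvPolynomial (Fin 2 × ℕ) F)}

theorem exists_dxy_eq (hdxyC : ∀ a : F, dxy (C a) = C (δF a))
    (hdxyX : ∀ (i : Fin 2) (k : ℕ), dxy (X (i, k)) = X (i, k + 1)) {n : ℕ}
    {P : MvPolynomial (Fin 2 × ℕ) F} (hP : P ∈ supported F (xLe n)) :
    ∃ T ∈ supported F (xLe n), dxy P = pderiv (0, n) P * X (0, n + 1) + T := by
  obtain ⟨T, hT, h⟩ := exists_deriv_eq dxy δF hdxyC X (fun v => (v.1, v.2 + 1))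
    (fun v => hdxyX v.1 v.2) (xLe n) (0, n) (fun v hv hne h0 => by
      have h1 := hv h0
      have h2 : v.2 ≠ n := fun h2 => hne (Prod.ext h0 h2)
      show v.2 + 1 ≤ n
      omega) hP
  rw [aeval_X_left_apply, aeval_X_left_apply] at h
  exact ⟨T, hT, h⟩

/-- Every proper derivative of `P` is linear in its highest `x`-derivative, with the separant of
`P` as coefficient. -/
theorem exists_iterate_dxy_eq (hdxyC : ∀ a : F, dxy (C a) = C (δF a))
    (hdxyX : ∀ (i : Fin 2) (k : ℕ), dxy (X (i, k)) = X (i, k + 1)) {n : ℕ}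
    {P : MvPolynomial (Fin 2 × ℕ) F} (hP : P ∈ supported F (xLe n)) (j : ℕ) :
    ∃ T ∈ supported F (xLe (n + j)),
      (⇑dxy)^[j + 1] P = pderiv (0, n) P * X (0, n + j + 1) + T := by
  induction j with
  | zero => exact exists_dxy_eq hdxyC hdxyX hP
  | succ j ih =>
    obtain ⟨T, hT, hTe⟩ := ih
    have hS : pderiv (0, n) P ∈ supported F (xLe (n + j)) :=
      supported_mono (xLe_mono (by omega)) (pderiv_mem_supported hP _)
    have hmem : (⇑dxy)^[j + 1] P ∈ supported F (xLe (n + j + 1)) := by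
      rw [hTe]
      exact add_mem (mul_mem (supported_mono (xLe_mono (by omega)) hS)
        (X_mem_supported.2 fun _ => le_rfl)) (supported_mono (xLe_mono (by omega)) hT)
    obtain ⟨T', hT', hTe'⟩ := exists_dxy_eq hdxyC hdxyX hmem
    refine ⟨T', hT', ?_⟩
    rw [Function.iterate_succ_apply', hTe', hTe,
      pderiv_mul_X_add (succ_notMem_xLe (by omega)) hS hT]
    rfl

theorem iterate_dxy_mem_supported (hdxyC : ∀ a : F, dxy (C a) = C (δF a))
    (hdxyX : ∀ (i : Fin 2) (k : ℕ), dxy (X (i, k)) = X (i, k + 1)) {n : ℕ}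
    {P : MvPolynomial (Fin 2 × ℕ) F} (hP : P ∈ supported F (xLe n)) (j : ℕ) :
    (⇑dxy)^[j] P ∈ supported F (xLe (n + j)) := by
  cases j with
  | zero => exact hP
  | succ j =>
    obtain ⟨T, hT, hTe⟩ := exists_iterate_dxy_eq hdxyC hdxyX hP j
    rw [hTe]
    exact add_mem (mul_mem (supported_mono (xLe_mono (by omega)) (pderiv_mem_supported hP _))
        (X_mem_supported.2 fun _ => le_rfl)) (supported_mono (xLe_mono (by omega)) hT)

theorem iterate_dxy_mem_supported_y (hdxyC : ∀ a : F, dxy (C a) = C (δF a))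
    (hdxyX : ∀ (i : Fin 2) (k : ℕ), dxy (X (i, k)) = X (i, k + 1))
    {P : MvPolynomial (Fin 2 × ℕ) F} (hP : P ∈ supported F {v | v.1 ≠ 0}) (j : ℕ) :
    (⇑dxy)^[j] P ∈ supported F {v | v.1 ≠ 0} := by
  induction j with
  | zero => exact hP
  | succ j ih =>
    rw [Function.iterate_succ_apply']
    obtain ⟨T, hT, h⟩ := exists_deriv_eq dxy δF hdxyC X (fun v => (v.1, v.2 + 1))
      (fun v => hdxyX v.1 v.2) {v | v.1 ≠ 0} (0, 0) (fun v hv _ => hv) ih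
    rw [pderiv_eq_zero_of_supported ih (by simp)] at h
    simp only [aeval_X_left_apply, zero_mul, zero_add] at h
    exact (congrArg (· ∈ supported F {v : Fin 2 × ℕ | v.1 ≠ 0}) h).mpr hT

theorem evalD2_iterate {D : Derivation ℤ E E}
    (hD : ∀ a : F, D (algebraMap F E a) = algebraMap F E (δF a))
    (hdxyC : ∀ a : F, dxy (C a) = C (δF a))
    (hdxyX : ∀ (i : Fin 2) (k : ℕ), dxy (X (i, k)) = X (i, k + 1)) (η₁ η₂ : E)
    (P : MvPolynomial (Fin 2 × ℕ) F) (k : ℕ) :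
    evalD2 F D η₁ η₂ ((⇑dxy)^[k] P) = (⇑D)^[k] (evalD2 F D η₁ η₂ P) := by
  have h1 : ∀ P, evalD2 F D η₁ η₂ (dxy P) = D (evalD2 F D η₁ η₂ P) := by
    intro P
    induction P using MvPolynomial.induction_on with
    | C a => simp [hdxyC, evalD2, hD]
    | add p q hp hq => simp [hp, hq]
    | mul_X p v hp =>
      have hX : evalD2 F D η₁ η₂ (dxy (X v)) = D (evalD2 F D η₁ η₂ (X v)) := by
        rw [show v = (v.1, v.2) from rfl, hdxyX]
        simp only [evalD2, aeval_X, Function.iterate_succ_apply']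
      simp only [Derivation.leibniz, map_add, map_mul, smul_eq_mul, hp, hX]
  exact (Function.Semiconj.iterate_right (f := evalD2 F D η₁ η₂) h1 k) P

/-! ### The general component contains no polynomial of lower order -/

theorem aeval_congr_supported {σ K : Type*} [CommRing K] [Algebra F K] {f g : σ → K} {V : Set σ}
    (h : ∀ i ∈ V, f i = g i) {P : MvPolynomial σ F} (hP : P ∈ supported F V) :
    aeval f P = aeval g P :=
  eval₂Hom_congr' rfl (fun i hi _ => h i (mem_supported.1 hP hi)) rfl

/-- Let `v` be a zero of `A` in a field at which the separant of `A` does not vanish. Since the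
derivatives of `A` are linear in the successive new variables with the separant as coefficient,
the higher coordinates of `v` can be chosen such that finitely many derivatives of `A` vanish. -/
theorem exists_extend_zero (hdxyC : ∀ a : F, dxy (C a) = C (δF a))
    (hdxyX : ∀ (i : Fin 2) (k : ℕ), dxy (X (i, k)) = X (i, k + 1)) {s : ℕ}
    {A : MvPolynomial (Fin 2 × ℕ) F} (hA : A ∈ supported F (xLe s))
    {K : Type*} [Field K] [Algebra F K] (v : Fin 2 × ℕ → K) (hv : aeval v A = 0)
    (hS : aeval v (pderiv (0, s) A) ≠ 0) (N : ℕ) :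
    ∃ v' : Fin 2 × ℕ → K, (∀ i ∈ xLe s, v' i = v i) ∧
      ∀ j ≤ N, aeval v' ((⇑dxy)^[j] A) = 0 := by
  induction N with
  | zero =>
    refine ⟨v, fun _ _ => rfl, fun j hj => ?_⟩
    obtain rfl : j = 0 := by omega
    exact hv
  | succ N ih =>
    classical
    obtain ⟨w, hw, hwA⟩ := ih
    obtain ⟨T, hT, hTe⟩ := exists_iterate_dxy_eq hdxyC hdxyX hA N
    set S := pderiv (0, s) A with hSdef
    have hSs : S ∈ supported F (xLe s) := pderiv_mem_supported hA _
    let w' := Function.update w (0, s + N + 1) (-(aeval w T) / aeval v S)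
    have hww : ∀ i ∈ xLe (s + N), w' i = w i := fun i hi =>
      Function.update_of_ne (fun h => succ_notMem_xLe (Nat.lt_succ_self _) (h ▸ hi)) _ _
    have hws : ∀ i ∈ xLe s, w' i = v i := fun i hi =>
      (hww i (xLe_mono (by omega) hi)).trans (hw i hi)
    refine ⟨w', hws, fun j hj => ?_⟩
    rcases Nat.lt_or_ge N j with hlt | hle
    · obtain rfl : j = N + 1 := by omega
      rw [hTe, map_add, map_mul, aeval_X, aeval_congr_supported hww hT,
        aeval_congr_supported hws hSs]
      simp only [w', Function.update_self]
      field_simp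
      ring
    · rw [aeval_congr_supported hww (supported_mono (xLe_mono (by omega))
        (iterate_dxy_mem_supported hdxyC hdxyX hA j))]
      exact hwA j hle

/-- A nonzero polynomial of `x`-order below `s = ord_x A` is not in `sat(A)`: it does not vanish
at the generic zero of `A`, whereas elements of `sat(A)` vanish at every zero of the derivatives
of `A` that is not a zero of the separant. -/
theorem notMem_sat [CharZero F] (hdxyC : ∀ a : F, dxy (C a) = C (δF a))
    (hdxyX : ∀ (i : Fin 2) (k : ℕ), dxy (X (i, k)) = X (i, k + 1)) {s : ℕ}
    {A : MvPolynomial (Fin 2 × ℕ) F} (hA : A ∈ supported F (xLe s)) (hirr : Irreducible A)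
    (hs : (0, s) ∈ A.vars) {f : MvPolynomial (Fin 2 × ℕ) F} (hf0 : f ≠ 0)
    (hf : f ∈ supported F (xLe s)) (hfs : (0, s) ∉ f.vars) (m : ℕ) :
    pderiv (0, s) A ^ m * f ∉ diffIdeal dxy A := by
  intro hmem
  have hprime : (Ideal.span {A}).IsPrime :=
    (Ideal.span_singleton_prime hirr.ne_zero).2 hirr.prime
  let Q := MvPolynomial (Fin 2 × ℕ) F ⧸ Ideal.span {A}
  let K := FractionRing Q
  let φ : MvPolynomial (Fin 2 × ℕ) F →ₐ[F] K :=
    (IsScalarTower.toAlgHom F Q K).comp (Ideal.Quotient.mkₐ F (Ideal.span {A}))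
  have hφ : ∀ g, φ g = 0 ↔ A ∣ g := by
    intro g
    rw [← Ideal.mem_span_singleton, ← Ideal.Quotient.eq_zero_iff_mem]
    exact IsFractionRing.to_map_eq_zero_iff (R := Q) (K := K)
  have hφv : ∀ g, aeval (fun i => φ (X i)) g = φ g := fun g => by
    rw [← comp_aeval_apply, aeval_X_left_apply]
  have hSφ : φ (pderiv (0, s) A) ≠ 0 := fun h => not_dvd_pderiv hs ((hφ _).1 h)
  have hfφ : φ f ≠ 0 := by
    intro h
    obtain ⟨g, rfl⟩ := (hφ _).1 h
    rw [mem_vars_iff_degreeOf_ne_zero, not_not,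
      degreeOf_mul_eq (left_ne_zero_of_mul hf0) (right_ne_zero_of_mul hf0)] at hfs
    rw [mem_vars_iff_degreeOf_ne_zero] at hs
    omega
  -- Only finitely many derivatives of `A` occur in a given element of `[A]`.
  obtain ⟨c, hc⟩ := Finsupp.mem_ideal_span_range_iff_exists_finsupp.1 hmem
  obtain ⟨v, hv, hvA⟩ := exists_extend_zero hdxyC hdxyX hA (fun i => φ (X i))
    (by rw [hφv, hφ]) (by rwa [hφv]) (c.support.sup id)
  have h0 : aeval v (pderiv (0, s) A ^ m * f) = 0 := by
    rw [← hc, Finsupp.sum, map_sum]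
    refine Finset.sum_eq_zero fun j hj => ?_
    rw [map_mul]
    exact mul_eq_zero_of_right _ (hvA j (Finset.le_sup (f := id) hj))
  rw [map_mul, map_pow, aeval_congr_supported hv hf, aeval_congr_supported hv
    (pderiv_mem_supported hA _), hφv, hφv] at h0
  exact mul_ne_zero (pow_ne_zero m hSφ) hfφ h0

/-- The first component says that `x_s` occurs in `P`, the second that no higher `x_k` does. -/
theorem of_ordIdx_eq {P : MvPolynomial (Fin 2 × ℕ) F} {s : ℕ}
    (hs : ordIdx 0 P = (s : WithBot ℕ)) :
    ((0 : Fin 2), s) ∈ P.vars ∧ P ∈ supported F (xLe s) := by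
  constructor
  · obtain ⟨⟨i, j⟩, hv, rfl⟩ := Finset.mem_image.1 (Finset.mem_of_max hs)
    obtain ⟨hv, h0⟩ := Finset.mem_filter.1 hv
    obtain rfl : i = 0 := h0
    exact hv
  · exact mem_supported.2 fun v hv h0 =>
      Finset.le_max_of_eq (Finset.mem_image.2 ⟨v, Finset.mem_filter.2 ⟨hv, h0⟩, rfl⟩) hs

/-- A proper derivative `d^k(B)` involving `x` has larger `x`-order than `B`. -/
theorem exists_lt_of_iterate [CharZero F] (hdxyC : ∀ a : F, dxy (C a) = C (δF a))
    (hdxyX : ∀ (i : Fin 2) (k : ℕ), dxy (X (i, k)) = X (i, k + 1))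
    {B : MvPolynomial (Fin 2 × ℕ) F} {k s : ℕ} (hk : 1 ≤ k)
    (hs : ((0 : Fin 2), s) ∈ ((⇑dxy)^[k] B).vars)
    (hle : (⇑dxy)^[k] B ∈ supported F (xLe s)) :
    ∃ n < s, B ∈ supported F (xLe n) := by
  obtain ⟨l, rfl⟩ : ∃ l, k = l + 1 := ⟨k - 1, by omega⟩
  rcases h : ordIdx 0 B with _ | n
  · exfalso
    have hBy : B ∈ supported F {v | v.1 ≠ 0} := mem_supported.2 fun v hv h0 => by
      have hmem : v.2 ∈ (B.vars.filter fun v => v.1 = 0).image Prod.snd :=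
        Finset.mem_image.2 ⟨v, Finset.mem_filter.2 ⟨hv, h0⟩, rfl⟩
      rw [Finset.max_eq_bot.1 h] at hmem
      exact Finset.notMem_empty _ hmem
    exact mem_supported.1 (iterate_dxy_mem_supported_y hdxyC hdxyX hBy (l + 1)) hs rfl
  · obtain ⟨hn, hBn⟩ := of_ordIdx_eq h
    refine ⟨n, ?_, hBn⟩
    by_contra hlt
    obtain ⟨T, hT, hTe⟩ := exists_iterate_dxy_eq hdxyC hdxyX hBn l
    have h1 := pderiv_eq_zero_of_supported hle (i := (0, n + l + 1)) (succ_notMem_xLe (by omega))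
    rw [hTe, pderiv_mul_X_add (succ_notMem_xLe (Nat.lt_succ_self _))
      (supported_mono (xLe_mono (by omega)) (pderiv_mem_supported hBn _)) hT] at h1
    exact pderiv_ne_zero_of_mem_vars hn h1

end Helpers

/-- if `A = d^k(B)` is a proper derivative (`k ≥ 1`) of some
`B ∉ F`, then the differential curve `(C, A)` is not unirational. -/
theorem proper_derivative_not_unirational [CharZero F]
    (δF : Derivation ℤ F F) (D : Derivation ℤ E E)
    (hD : ∀ a : F, D (algebraMap F E a) = algebraMap F E (δF a))
    (dxy : Derivation ℤ (MvPolynomial (Fin 2 × ℕ) F) (MvPolynomial (Fin 2 × ℕ) F))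
    (hdxyC : ∀ a : F, dxy (C a) = C (δF a))
    (hdxyX : ∀ (i : Fin 2) (k : ℕ), dxy (X (i, k)) = X (i, k + 1))
    (B : MvPolynomial (Fin 2 × ℕ) F) (hB : ∀ c : F, B ≠ C c)
    (k : ℕ) (hk : 1 ≤ k)
    (A : MvPolynomial (Fin 2 × ℕ) F) (hA : A = (⇑dxy)^[k] B)
    (hirr : Irreducible A) (s : ℕ) (hs : ordIdx 0 A = (s : WithBot ℕ)) :
    ¬ ∃ (u : E) (P₁ Q₁ P₂ Q₂ : MvPolynomial ℕ F),
        IsParam F D dxy A u P₁ Q₁ P₂ Q₂ := by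
  rintro ⟨u, P₁, Q₁, P₂, Q₂, hu, -, hQ₁, -, -, hQ₂, -, -, hI⟩
  obtain ⟨hsA, hAs⟩ := of_ordIdx_eq hs
  have hsep : sepX A = pderiv ((0 : Fin 2), s) A := by
    rw [sepX, hs]; rfl
  obtain ⟨n, hns, hBn⟩ := exists_lt_of_iterate hdxyC hdxyX hk (hA ▸ hsA) (hA ▸ hAs)
  set η₁ := evalD F D u P₁ / evalD F D u Q₁
  set η₂ := evalD F D u P₂ / evalD F D u Q₂
  have hAη : evalD2 F D η₁ η₂ A = 0 := by
    have : A ∈ satSet dxy A := ⟨0, by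
      rw [pow_zero, one_mul]; exact Ideal.subset_span ⟨0, rfl⟩⟩
    rw [← hI] at this
    exact this
  rw [hA, evalD2_iterate hD hdxyC hdxyX] at hAη
  obtain ⟨c, hc⟩ := mem_range_of_iterate hD hu k
    (evalD2_mem_ratSet hD hu (mem_ratSet hu P₁ hQ₁) (mem_ratSet hu P₂ hQ₂) B) hAη
  have hBc : B - C c ∈ satSet dxy A := by
    rw [← hI]
    show evalD2 F D η₁ η₂ (B - C c) = 0
    rw [map_sub, hc]
    simp [evalD2]
  obtain ⟨m, hm⟩ := hBc
  have hBcn : B - C c ∈ supported F (xLe n) := sub_mem hBn (Subalgebra.algebraMap_mem _ c)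
  rw [hsep] at hm
  exact notMem_sat hdxyC hdxyX hAs hirr hsA (sub_ne_zero.2 (hB c))
    (supported_mono (xLe_mono hns.le) hBcn)
    (fun h => succ_notMem_xLe hns (mem_supported.1 hBcn h)) m hm
end DiffCurve
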